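/- Let a > 0 be real and let A, B, C be complex numbers with Re(C) > (a²/4)((Im A)² + (Im B)²). Then ∫_0^∞ ∫_ℝ ∫_ℝ ((x² + y²)/t²) · exp(−C t − (a²/(4t))(x + tA)² − (a²/(4t))(y + tB)²) dx dy dt = (4π/(a² C)) · (4/a² + (A² + B²)/C), the triple integral being absolutely convergent. In particular, if moreover C = 1 − (a²/4)(A² + B²), the value equals 16π/(a⁴ C²). -/

import Mathlib

open MeasureTheory Complex Real Filter

lemma gm_eq (b : ℝ) (z : ℂ) (x : ℝ) : -(b:ℂ) * ((x:ℂ) + z) ^ 2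
    = (-(b:ℂ)) * (x:ℂ)^2 + (-2 * b * z) * x + (-(b:ℂ) * z^2) := by ring

lemma gm_int0 (b : ℝ) (hb : 0 < b) (z : ℂ) :
    Integrable (fun x : ℝ => cexp (-(b:ℂ) * ((x:ℂ) + z) ^ 2)) := by
  simp_rw [gm_eq]
  exact integrable_cexp_quadratic' (by simpa using hb) _ _

lemma gm_val0 (b : ℝ) (hb : 0 < b) (z : ℂ) :
    ∫ x : ℝ, cexp (-(b:ℂ) * ((x:ℂ) + z) ^ 2) = (π / b : ℂ) ^ (1 / 2 : ℂ) := by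
  simp_rw [gm_eq]
  rw [integral_cexp_quadratic (by simpa using hb)]
  have hb' : (b:ℂ) ≠ 0 := by exact_mod_cast hb.ne'
  rw [show -(b:ℂ) * z^2 - (-2 * b * z)^2 / (4 * -(b:ℂ)) = 0 by field_simp; ring]
  simp

lemma gm_int_dom (b : ℝ) (hb : 0 < b) (z : ℂ) (f : ℝ → ℂ) (hf : Continuous f)
    (hfb : ∀ x, ‖f x‖ ≤ 2 * (rexp x + rexp (-x))) :
    Integrable (fun x : ℝ => f x * cexp (-(b:ℂ) * ((x:ℂ) + z) ^ 2)) := by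
  have h1 : Integrable (fun x : ℝ => cexp (x + (-(b:ℂ) * ((x:ℂ) + z) ^ 2))) := by
    refine (integrable_cexp_quadratic' (b := -(b:ℂ)) (by simpa using hb) (1 -2 * b * z)
      (-(b:ℂ) * z^2)).congr (ae_of_all _ fun x => ?_)
    dsimp only; congr 1; ring
  have h2 : Integrable (fun x : ℝ => cexp (-x + (-(b:ℂ) * ((x:ℂ) + z) ^ 2))) := by
    refine (integrable_cexp_quadratic' (b := -(b:ℂ)) (by simpa using hb) (-1 -2 * b * z)
      (-(b:ℂ) * z^2)).congr (ae_of_all _ fun x => ?_)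
    dsimp only; congr 1; ring
  refine ((h1.norm.add h2.norm).const_mul 2).mono' ?_ (ae_of_all _ fun x => ?_)
  · exact (hf.mul (by fun_prop)).aestronglyMeasurable
  · simp only [Pi.add_apply]
    rw [norm_mul, Complex.exp_add, Complex.exp_add, norm_mul, norm_mul, ← add_mul, ← mul_assoc]
    gcongr
    have := hfb x
    rw [← Complex.ofReal_neg, Complex.norm_exp_ofReal, Complex.norm_exp_ofReal]
    exact this

lemma sq_le_aux (x : ℝ) : x^2 ≤ 2 * (rexp x + rexp (-x)) := by
  rcases le_total 0 x with h | h
  · have := Real.quadratic_le_exp_of_nonneg h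
    have := Real.exp_pos (-x)
    nlinarith
  · have := Real.quadratic_le_exp_of_nonneg (x := -x) (by linarith)
    have := Real.exp_pos x
    nlinarith

lemma abs_le_aux (x : ℝ) : |x| ≤ 2 * (rexp x + rexp (-x)) := by
  rcases abs_cases x with ⟨h, _⟩ | ⟨h, _⟩ <;> rw [h]
  · have := Real.add_one_le_exp x
    have := Real.exp_pos (-x)
    nlinarith
  · have := Real.add_one_le_exp (-x)
    have := Real.exp_pos x
    nlinarith

lemma gm_int1 (b : ℝ) (hb : 0 < b) (z : ℂ) :
    Integrable (fun x : ℝ => (x:ℂ) * cexp (-(b:ℂ) * ((x:ℂ) + z) ^ 2)) :=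
  gm_int_dom b hb z (fun x => (x:ℂ)) (by fun_prop) (fun x => by
    simpa using abs_le_aux x)

lemma gm_int2 (b : ℝ) (hb : 0 < b) (z : ℂ) :
    Integrable (fun x : ℝ => (x:ℂ)^2 * cexp (-(b:ℂ) * ((x:ℂ) + z) ^ 2)) :=
  gm_int_dom b hb z (fun x => (x:ℂ)^2) (by fun_prop) (fun x => by
    simpa using sq_le_aux x)

lemma gm_val2 (b : ℝ) (hb : 0 < b) (z : ℂ) :
    ∫ x : ℝ, (x:ℂ)^2 * cexp (-(b:ℂ) * ((x:ℂ) + z) ^ 2)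
      = (1 / (2 * b) + z^2) * (π / b : ℂ) ^ (1 / 2 : ℂ) := by
  have hb' : (b:ℂ) ≠ 0 := by exact_mod_cast hb.ne'
  have i0 := gm_int0 b hb z
  have i1 := gm_int1 b hb z
  have i2 := gm_int2 b hb z
  have hd : ∀ x : ℝ, HasDerivAt (fun x : ℝ => ((x:ℂ) - z) * cexp (-(b:ℂ) * ((x:ℂ) + z) ^ 2))
      ((1 + 2 * b * z^2) * cexp (-(b:ℂ) * ((x:ℂ) + z) ^ 2)
        - (2 * b) * ((x:ℂ)^2 * cexp (-(b:ℂ) * ((x:ℂ) + z) ^ 2))) x := by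
    intro x
    have h0 : HasDerivAt (fun x : ℝ => (x:ℂ)) 1 x := Complex.ofRealCLM.hasDerivAt
    have h := (h0.sub_const z).mul ((((h0.add_const z).pow 2).const_mul (-(b:ℂ))).cexp)
    refine h.congr_deriv ?_
    simp
    ring
  have hz := integral_eq_zero_of_hasDerivAt_of_integrable hd
    ((i0.const_mul _).sub (i2.const_mul _)) (by
      refine (i1.sub (i0.const_mul z)).congr (ae_of_all _ fun x => ?_)
      simp only [Pi.sub_apply]; ring)
  rw [integral_sub (i0.const_mul _) (i2.const_mul _), integral_const_mul, integral_const_mul,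
    gm_val0 b hb] at hz
  have : ∫ x : ℝ, (x:ℂ)^2 * cexp (-(b:ℂ) * ((x:ℂ) + z) ^ 2) =
     ((1 + 2 * b * z^2) * (π / b : ℂ) ^ (1 / 2 : ℂ)) / (2 * b) := by
    rw [eq_div_iff (by simpa using hb')]
    linear_combination -hz
  rw [this]; field_simp

/-- The integrand. -/
noncomputable def gF (a : ℝ) (A B C : ℂ) (t y x : ℝ) : ℂ :=
  (((x ^ 2 + y ^ 2 : ℝ) : ℂ) / (t : ℂ) ^ 2) *
          Complex.exp (-C * (t : ℂ) - ((a : ℂ) ^ 2 / (4 * (t : ℂ))) * ((x : ℂ) + (t : ℂ) * A) ^ 2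
            - ((a : ℂ) ^ 2 / (4 * (t : ℂ))) * ((y : ℂ) + (t : ℂ) * B) ^ 2)

lemma gF_eq (a : ℝ) (A B C : ℂ) (t y x : ℝ) : gF a A B C t y x =
    (cexp (-C * t) / (t:ℂ)^2) *
    (cexp (-((a^2/(4*t) : ℝ):ℂ) * ((y:ℂ) + t * B) ^ 2) *
      ((x:ℂ)^2 * cexp (-((a^2/(4*t) : ℝ):ℂ) * ((x:ℂ) + t * A) ^ 2))
    + ((y:ℂ)^2 * cexp (-((a^2/(4*t) : ℝ):ℂ) * ((y:ℂ) + t * B) ^ 2)) *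
      cexp (-((a^2/(4*t) : ℝ):ℂ) * ((x:ℂ) + t * A) ^ 2)) := by
  unfold gF
  rw [sub_eq_add_neg, sub_eq_add_neg, Complex.exp_add, Complex.exp_add]
  push_cast
  simp only [neg_mul]
  ring

lemma gF_inner_int (a : ℝ) (ha : 0 < a) (A B C : ℂ) (t : ℝ) (ht : 0 < t) :
    Integrable (fun p : ℝ × ℝ => gF a A B C t p.1 p.2) := by
  simp_rw [gF_eq]
  have hb : 0 < a^2/(4*t) := by positivity
  exact (((gm_int0 _ hb (t*B)).mul_prod (gm_int2 _ hb (t*A))).add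
    ((gm_int2 _ hb (t*B)).mul_prod (gm_int0 _ hb (t*A)))).const_mul _

lemma gF_inner_val (a : ℝ) (ha : 0 < a) (A B C : ℂ) (t : ℝ) (ht : 0 < t) :
    ∫ p : ℝ × ℝ, gF a A B C t p.1 p.2 =
     (4 * π / a^2) * (4/a^2 * cexp (-(C * t)) + (A^2+B^2) * (t * cexp (-(C * t)))) := by
  simp_rw [gF_eq]
  have hb : 0 < a^2/(4*t) := by positivity
  rw [integral_const_mul, Measure.volume_eq_prod,
    integral_add ((gm_int0 _ hb (t*B)).mul_prod (gm_int2 _ hb (t*A)))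
    ((gm_int2 _ hb (t*B)).mul_prod (gm_int0 _ hb (t*A))),
    integral_prod_mul (fun y : ℝ => cexp (-((a^2/(4*t) : ℝ):ℂ) * ((y:ℂ) + t * B) ^ 2)) 
      (fun x : ℝ => (x:ℂ)^2 * cexp (-((a^2/(4*t) : ℝ):ℂ) * ((x:ℂ) + t * A) ^ 2)),
    integral_prod_mul (fun y : ℝ => (y:ℂ)^2 * cexp (-((a^2/(4*t) : ℝ):ℂ) * ((y:ℂ) + t * B) ^ 2)) 
      (fun x : ℝ => cexp (-((a^2/(4*t) : ℝ):ℂ) * ((x:ℂ) + t * A) ^ 2)),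
    gm_val0 _ hb, gm_val0 _ hb, gm_val2 _ hb, gm_val2 _ hb]
  have hs : ((π:ℂ) / ((a^2/(4*t) : ℝ):ℂ)) ^ (1 / 2 : ℂ) * ((π:ℂ) / ((a^2/(4*t) : ℝ):ℂ)) ^ (1 / 2 : ℂ)
      = (π:ℂ) / ((a^2/(4*t) : ℝ):ℂ) := by
    rw [← Complex.cpow_add _ _ (div_ne_zero (by exact_mod_cast Real.pi_ne_zero)
      (by exact_mod_cast hb.ne'))]
    norm_num
  generalize ((π:ℂ) / ((a^2/(4*t) : ℝ):ℂ)) ^ (1 / 2 : ℂ) = s at *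
  have ha' : (a:ℂ) ≠ 0 := by exact_mod_cast ha.ne'
  have ht' : (t:ℂ) ≠ 0 := by exact_mod_cast ht.ne'
  trans cexp (-C * t) / (t:ℂ)^2 * ((s * s) * (1 / ((a^2/(4*t) : ℝ):ℂ) + (t*A)^2 + (t*B)^2))
  · ring
  rw [hs, neg_mul]
  push_cast
  field_simp
  ring

lemma t_int (C : ℂ) (hC : 0 < C.re) : IntegrableOn (fun t : ℝ => (t:ℂ) * cexp (-(C * t))) (Set.Ioi 0) := by
  have h := integrableOn_rpow_mul_exp_neg_mul_rpow (p := 1) (s := 1) (by norm_num) one_pos hC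
  refine Integrable.mono' h (by fun_prop) ?_
  filter_upwards [ae_restrict_mem measurableSet_Ioi] with t ht
  rw [norm_mul, Complex.norm_exp, Complex.norm_real, Real.norm_of_nonneg (le_of_lt ht)]
  simp

lemma t_int0 (C : ℂ) (hC : 0 < C.re) : IntegrableOn (fun t : ℝ => cexp (-(C * t))) (Set.Ioi 0) := by
  simpa using integrableOn_exp_mul_complex_Ioi (a := -C) (by simpa using hC) 0

lemma t_val0 (C : ℂ) (hC : 0 < C.re) : ∫ t : ℝ in Set.Ioi 0, cexp (-(C * t)) = 1 / C := by
  have := integral_exp_mul_complex_Ioi (a := -C) (by simpa using hC) 0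
  simp only [neg_mul] at this
  rw [this]; simp

lemma t_val (C : ℂ) (hC : 0 < C.re) : ∫ t : ℝ in Set.Ioi 0, (t:ℂ) * cexp (-(C * t)) = 1 / C^2 := by
  have hC0 : C ≠ 0 := by rintro rfl; simp at hC
  have hd : ∀ t : ℝ, HasDerivAt (fun t : ℝ => (t:ℂ) * cexp (-(C * t)))
      (cexp (-(C * t)) - C * ((t:ℂ) * cexp (-(C * t)))) t := by
    intro t
    have h0 : HasDerivAt (fun x : ℝ => (x:ℂ)) 1 t := Complex.ofRealCLM.hasDerivAt
    refine (h0.mul ((h0.const_mul C).neg.cexp)).congr_deriv ?_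
    simp
    ring
  have hi := (t_int0 C hC).sub ((t_int C hC).const_mul C)
  have hl := tendsto_zero_of_hasDerivAt_of_integrableOn_Ioi (a := 0)
    (fun t _ => hd t) hi (t_int C hC)
  have h := integral_Ioi_of_hasDerivAt_of_tendsto' (a := 0) (fun t _ => hd t) hi hl
  rw [integral_sub (t_int0 C hC) ((t_int C hC).const_mul C), integral_const_mul, t_val0 C hC] at h
  simp only [Complex.ofReal_zero, zero_mul, sub_zero] at h
  rw [eq_div_iff (pow_ne_zero 2 hC0)]
  have h1 : (1 / C) * C = 1 := by field_simp
  linear_combination h1 - C * h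

lemma gF_outer_int (a : ℝ) (A B C : ℂ) (hC : 0 < C.re) : IntegrableOn (fun t : ℝ =>
     (4 * π / a^2 : ℂ) * (4/a^2 * cexp (-(C * t)) + (A^2+B^2) * (t * cexp (-(C * t))))) (Set.Ioi 0) :=
  (((t_int0 C hC).const_mul _).add ((t_int C hC).const_mul _)).const_mul _

lemma gF_outer_val (a : ℝ) (A B C : ℂ) (hC : 0 < C.re) : ∫ t : ℝ in Set.Ioi 0,
     (4 * π / a^2 : ℂ) * (4/a^2 * cexp (-(C * t)) + (A^2+B^2) * (t * cexp (-(C * t))))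
     = (4 * (π : ℂ) / ((a : ℂ) ^ 2 * C)) * (4 / (a : ℂ) ^ 2 + (A ^ 2 + B ^ 2) / C) := by
  rw [integral_const_mul, integral_add ((t_int0 C hC).const_mul _) ((t_int C hC).const_mul _),
    integral_const_mul, integral_const_mul, t_val0 C hC, t_val C hC]
  ring

lemma gF_norm (a : ℝ) (A B C : ℂ) (t y x : ℝ) (ht : 0 < t) :
    ((‖gF a A B C t y x‖ : ℝ) : ℂ) =
    gF a (A.re : ℂ) (B.re : ℂ) ((C.re - (a ^ 2 / 4) * (A.im ^ 2 + B.im ^ 2) : ℝ) : ℂ) t y x := by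
  unfold gF
  rw [norm_mul, Complex.norm_exp, norm_div, norm_pow, Complex.norm_real, Complex.norm_real,
    Real.norm_of_nonneg ht.le, Real.norm_of_nonneg (by positivity)]
  have : (-C * (t : ℂ) - ((a : ℂ) ^ 2 / (4 * (t : ℂ))) * ((x : ℂ) + (t : ℂ) * A) ^ 2
            - ((a : ℂ) ^ 2 / (4 * (t : ℂ))) * ((y : ℂ) + (t : ℂ) * B) ^ 2).re
      = -(C.re - (a ^ 2 / 4) * (A.im ^ 2 + B.im ^ 2)) * t - (a^2/(4*t)) * (x + t * A.re)^2
       - (a^2/(4*t)) * (y + t * B.re)^2 := by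
    have e : ((a : ℂ) ^ 2 / (4 * (t : ℂ))) = ((a^2/(4*t) : ℝ) : ℂ) := by push_cast; rfl
    rw [e, sub_re, sub_re, re_ofReal_mul, re_ofReal_mul, pow_two ((x:ℂ) + _), pow_two ((y:ℂ) + _)]
    simp
    field_simp
    ring
  rw [this]
  push_cast
  rfl

lemma gF_int (a : ℝ) (ha : 0 < a) (A B C : ℂ)
    (hC : (a ^ 2 / 4) * (A.im ^ 2 + B.im ^ 2) < C.re) :
    IntegrableOn (fun p : ℝ × ℝ × ℝ => gF a A B C p.1 p.2.1 p.2.2)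
      (Set.Ioi (0 : ℝ) ×ˢ (Set.univ ×ˢ Set.univ)) := by
  rw [Set.univ_prod_univ, IntegrableOn, Measure.volume_eq_prod, ← Measure.prod_restrict,
    Measure.restrict_univ]
  have hm : Measurable (fun p : ℝ × ℝ × ℝ => gF a A B C p.1 p.2.1 p.2.2) := by
    unfold gF; fun_prop
  rw [integrable_prod_iff hm.aestronglyMeasurable]
  refine ⟨?_, ?_⟩
  · filter_upwards [ae_restrict_mem measurableSet_Ioi] with t ht
    exact gF_inner_int a ha A B C t ht
  · have h := (gF_outer_int a A.re B.re ((C.re - (a ^ 2 / 4) * (A.im ^ 2 + B.im ^ 2) : ℝ) : ℂ)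
      (by rw [ofReal_re]; linarith)).re
    refine h.congr ?_
    filter_upwards [ae_restrict_mem measurableSet_Ioi] with t ht
    rw [← gF_inner_val a ha _ _ _ t ht]
    simp_rw [← gF_norm a A B C t _ _ ht]
    rw [integral_complex_ofReal]
    simp

theorem gaussian_triple_integral_second_moment (a : ℝ) (ha : 0 < a) (A B C : ℂ)
    (hC : (a ^ 2 / 4) * (A.im ^ 2 + B.im ^ 2) < C.re) :
    MeasureTheory.IntegrableOn
      (fun p : ℝ × ℝ × ℝ =>
        (((p.2.2 ^ 2 + p.2.1 ^ 2 : ℝ) : ℂ) / (p.1 : ℂ) ^ 2) *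
          Complex.exp (-C * (p.1 : ℂ) - ((a : ℂ) ^ 2 / (4 * (p.1 : ℂ))) * ((p.2.2 : ℂ) + (p.1 : ℂ) * A) ^ 2
            - ((a : ℂ) ^ 2 / (4 * (p.1 : ℂ))) * ((p.2.1 : ℂ) + (p.1 : ℂ) * B) ^ 2))
      (Set.Ioi (0 : ℝ) ×ˢ (Set.univ ×ˢ Set.univ)) ∧
    (∫ t in Set.Ioi (0 : ℝ), ∫ y : ℝ, ∫ x : ℝ,
        (((x ^ 2 + y ^ 2 : ℝ) : ℂ) / (t : ℂ) ^ 2) *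
          Complex.exp (-C * (t : ℂ) - ((a : ℂ) ^ 2 / (4 * (t : ℂ))) * ((x : ℂ) + (t : ℂ) * A) ^ 2
            - ((a : ℂ) ^ 2 / (4 * (t : ℂ))) * ((y : ℂ) + (t : ℂ) * B) ^ 2)) =
      (4 * (π : ℂ) / ((a : ℂ) ^ 2 * C)) * (4 / (a : ℂ) ^ 2 + (A ^ 2 + B ^ 2) / C) ∧
    (C = 1 - ((a : ℂ) ^ 2 / 4) * (A ^ 2 + B ^ 2) →
      (∫ t in Set.Ioi (0 : ℝ), ∫ y : ℝ, ∫ x : ℝ,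
          (((x ^ 2 + y ^ 2 : ℝ) : ℂ) / (t : ℂ) ^ 2) *
            Complex.exp (-C * (t : ℂ) - ((a : ℂ) ^ 2 / (4 * (t : ℂ))) * ((x : ℂ) + (t : ℂ) * A) ^ 2
              - ((a : ℂ) ^ 2 / (4 * (t : ℂ))) * ((y : ℂ) + (t : ℂ) * B) ^ 2)) =
        16 * (π : ℂ) / ((a : ℂ) ^ 4 * C ^ 2)) := by
  have hCpos : 0 < C.re := lt_of_le_of_lt (by positivity) hC
  have hC0 : C ≠ 0 := by rintro rfl; simp at hCpos
  have ha' : (a:ℂ) ≠ 0 := by exact_mod_cast ha.ne'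
  have hval : (∫ t in Set.Ioi (0 : ℝ), ∫ y : ℝ, ∫ x : ℝ, gF a A B C t y x) =
      (4 * (π : ℂ) / ((a : ℂ) ^ 2 * C)) * (4 / (a : ℂ) ^ 2 + (A ^ 2 + B ^ 2) / C) := by
    rw [← gF_outer_val a A B C hCpos]
    refine setIntegral_congr_fun measurableSet_Ioi fun t ht => ?_
    rw [← gF_inner_val a ha A B C t ht]
    exact (integral_prod (fun p : ℝ × ℝ => gF a A B C t p.1 p.2)
      (gF_inner_int a ha A B C t ht)).symm
  refine ⟨gF_int a ha A B C hC, hval, fun h => ?_⟩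
  refine hval.trans ?_
  have h2 : A^2 + B^2 = (1 - C) * 4 / (a:ℂ)^2 := by
    rw [eq_div_iff (pow_ne_zero 2 ha')]
    linear_combination (4:ℂ) * h
  rw [h2]
  field_simp
  ring
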